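/- Let q_N be a sequence of joint probability densities on the space of (ξ, η) such that D_KL(p_{ξ,η} ‖ q_N) → 0 as N → ∞, where (ξ, η) is an absolutely continuous pair of random vectors with joint density p_{ξ,η}. Then I_{q_N}(ξ; η) → I(ξ; η) as N → ∞, where I_{q_N}(ξ; η) = E_{(ξ,η)∼p_{ξ,η}}[log(q_N(ξ, η)/((q_N)_ξ(ξ) (q_N)_η(η)))] and (q_N)_ξ, (q_N)_η are the marginals of q_N. -/

import Mathlib

open MeasureTheory Real Filter

/-!
On the support of `p` the logarithm splits, so that `I - I_q = D - D_X - D_Y`, where `D` is the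
divergence of `p` from `q` and `D_X`, `D_Y` are the divergences of their marginals. By the data
processing inequality `0 ≤ D_X, D_Y ≤ D`, hence `|I - I_q| ≤ D`.
-/

open InformationTheory

section Density

variable {α : Type*} [MeasurableSpace α] {μ : Measure α} {f g : α → ℝ}

/-- The measure with real density `f` with respect to `μ`; negative values of `f` count as `0`. -/
noncomputable def densityMeasure (μ : Measure α) (f : α → ℝ) : Measure α :=
  μ.withDensity fun x => ENNReal.ofReal (f x)

/-- `f` is a probability density with respect to `μ`. Integrability is not a field: a
non-integrable function has integral `0`. -/
structure IsProbDensity (μ : Measure α) (f : α → ℝ) : Prop where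
  nonneg : 0 ≤ᵐ[μ] f
  integral_eq_one : ∫ x, f x ∂μ = 1

lemma IsProbDensity.integrable (hf : IsProbDensity μ f) : Integrable f μ :=
  .of_integral_ne_zero (by simp [hf.integral_eq_one])

lemma IsProbDensity.aemeasurable (hf : IsProbDensity μ f) : AEMeasurable f μ :=
  hf.integrable.aemeasurable

lemma IsProbDensity.isProbabilityMeasure (hf : IsProbDensity μ f) :
    IsProbabilityMeasure (densityMeasure μ f) where
  measure_univ := by
    rw [densityMeasure, withDensity_apply _ .univ, Measure.restrict_univ,
      ← ofReal_integral_eq_lintegral_ofReal hf.integrable hf.nonneg, hf.integral_eq_one,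
      ENNReal.ofReal_one]

lemma ae_densityMeasure_iff (hf : AEMeasurable f μ) {P : α → Prop} :
    (∀ᵐ x ∂densityMeasure μ f, P x) ↔ ∀ᵐ x ∂μ, 0 < f x → P x := by
  simp [densityMeasure, ae_withDensity_iff' hf.ennreal_ofReal]

lemma ae_densityMeasure_pos (hf : AEMeasurable f μ) : ∀ᵐ x ∂densityMeasure μ f, 0 < f x :=
  (ae_densityMeasure_iff hf).2 (ae_of_all _ fun _ => id)

lemma densityMeasure_absolutelyContinuous (hf : AEMeasurable f μ) (hg : AEMeasurable g μ)
    (hfg : ∀ᵐ x ∂μ, 0 < f x → 0 < g x) : densityMeasure μ f ≪ densityMeasure μ g := by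
  refine Measure.ae_le_iff_absolutelyContinuous.1 fun s hs => ?_
  refine (ae_densityMeasure_iff hf).2 ?_
  filter_upwards [hfg, (ae_densityMeasure_iff hg).1 hs] with x hx hxs using hxs ∘ hx

lemma integrable_densityMeasure_iff (hf : AEMeasurable f μ) (hf0 : 0 ≤ᵐ[μ] f) {u : α → ℝ} :
    Integrable u (densityMeasure μ f) ↔ Integrable (fun x => f x * u x) μ := by
  rw [densityMeasure, integrable_withDensity_iff_integrable_smul₀' hf.ennreal_ofReal
    (ae_of_all _ fun _ => ENNReal.ofReal_lt_top)]
  refine integrable_congr ?_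
  filter_upwards [hf0] with x hx
  rw [ENNReal.toReal_ofReal hx, smul_eq_mul]

lemma integral_densityMeasure (hf : AEMeasurable f μ) (hf0 : 0 ≤ᵐ[μ] f) (u : α → ℝ) :
    ∫ x, u x ∂densityMeasure μ f = ∫ x, f x * u x ∂μ := by
  rw [densityMeasure, integral_withDensity_eq_integral_toReal_smul₀ hf.ennreal_ofReal
    (ae_of_all _ fun _ => ENNReal.ofReal_lt_top)]
  refine integral_congr_ae ?_
  filter_upwards [hf0] with x hx
  rw [ENNReal.toReal_ofReal hx, smul_eq_mul]

lemma ae_pos_and_llr_densityMeasure [SigmaFinite μ] (hf : AEMeasurable f μ)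
    (hg : AEMeasurable g μ) (hfg : densityMeasure μ f ≪ densityMeasure μ g) :
    ∀ᵐ x ∂densityMeasure μ f, 0 < f x ∧ 0 < g x ∧
      llr (densityMeasure μ f) (densityMeasure μ g) x = log (f x / g x) := by
  have hμ : densityMeasure μ f ≪ μ := withDensity_absolutelyContinuous _ _
  have : SigmaFinite (densityMeasure μ f) := SigmaFinite.withDensity_ofReal _
  have : SigmaFinite (densityMeasure μ g) := SigmaFinite.withDensity_ofReal _
  filter_upwards [ae_densityMeasure_pos hf, hfg.ae_le (ae_densityMeasure_pos hg),
    hμ.ae_le (Measure.rnDeriv_mul_rnDeriv (κ := μ) hfg),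
    hμ.ae_le (Measure.rnDeriv_withDensity₀ μ hf.ennreal_ofReal),
    hμ.ae_le (Measure.rnDeriv_withDensity₀ μ hg.ennreal_ofReal)] with x hfx hgx h_chain hf' hg'
  have h_mul := congrArg ENNReal.toReal h_chain
  rw [Pi.mul_apply, ENNReal.toReal_mul, densityMeasure, densityMeasure, hf', hg',
    ENNReal.toReal_ofReal hfx.le, ENNReal.toReal_ofReal hgx.le] at h_mul
  refine ⟨hfx, hgx, ?_⟩
  rw [llr, densityMeasure, densityMeasure, eq_div_of_mul_eq hgx.ne' h_mul]

end Density

section DataProcessing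

variable {α β : Type*} [MeasurableSpace α] [MeasurableSpace β]

lemma integral_llr_map_mem_Icc {P Q : Measure α} [IsFiniteMeasure P] [IsFiniteMeasure Q]
    {g : α → β} (hPQ : P ≪ Q) (h_univ : P .univ = Q .univ) (h_int : Integrable (llr P Q) P)
    (hg : Measurable g) :
    ∫ x, llr (P.map g) (Q.map g) (g x) ∂P ∈ Set.Icc 0 (∫ x, llr P Q x ∂P) := by
  have h_map_univ : P.map g .univ = Q.map g .univ := by
    simp only [Measure.map_apply hg .univ, Set.preimage_univ, h_univ]
  rw [← integral_map hg.aemeasurable (measurable_llr _ _).aestronglyMeasurable,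
    ← toReal_klDiv_of_measure_eq hPQ h_univ,
    ← toReal_klDiv_of_measure_eq (hPQ.map hg) h_map_univ]
  exact ⟨ENNReal.toReal_nonneg,
    ENNReal.toReal_mono (klDiv_ne_top hPQ h_int) (klDiv_map_le P Q hg)⟩

variable {P Q : Measure (α × β)} [IsFiniteMeasure P] [IsFiniteMeasure Q]

lemma integrable_llr_fst (hPQ : P ≪ Q) (h_int : Integrable (llr P Q) P) :
    Integrable (fun z => llr P.fst Q.fst z.1) P :=
  (integrable_llr_map hPQ measurable_fst h_int).comp_measurable measurable_fst

lemma integrable_llr_snd (hPQ : P ≪ Q) (h_int : Integrable (llr P Q) P) :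
    Integrable (fun z => llr P.snd Q.snd z.2) P :=
  (integrable_llr_map hPQ measurable_snd h_int).comp_measurable measurable_snd

lemma abs_integral_llr_sub_fst_sub_snd_le (hPQ : P ≪ Q) (h_univ : P .univ = Q .univ)
    (h_int : Integrable (llr P Q) P) :
    |∫ z, (llr P Q z - llr P.fst Q.fst z.1 - llr P.snd Q.snd z.2) ∂P| ≤ ∫ z, llr P Q z ∂P := by
  have h_fst : ∫ z, llr P.fst Q.fst z.1 ∂P ∈ Set.Icc 0 (∫ z, llr P Q z ∂P) :=
    integral_llr_map_mem_Icc hPQ h_univ h_int measurable_fst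
  have h_snd : ∫ z, llr P.snd Q.snd z.2 ∂P ∈ Set.Icc 0 (∫ z, llr P Q z ∂P) :=
    integral_llr_map_mem_Icc hPQ h_univ h_int measurable_snd
  have h_split : ∫ z, (llr P Q z - llr P.fst Q.fst z.1 - llr P.snd Q.snd z.2) ∂P =
      ∫ z, llr P Q z ∂P - ∫ z, llr P.fst Q.fst z.1 ∂P - ∫ z, llr P.snd Q.snd z.2 ∂P := by
    have h_fst_int := integrable_llr_fst hPQ h_int
    rw [integral_sub (by exact h_int.sub h_fst_int) (integrable_llr_snd hPQ h_int),
      integral_sub h_int h_fst_int]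
  rw [h_split, abs_le]
  constructor <;> linarith [h_fst.1, h_fst.2, h_snd.1, h_snd.2]

end DataProcessing

section Marginal

variable {α β : Type*} [MeasurableSpace α] [MeasurableSpace β] {μ : Measure α} {ν : Measure β}
  {f : α × β → ℝ}

/-- The density of the first component of a pair with joint density `f`. -/
noncomputable def fstMarginal (ν : Measure β) (f : α × β → ℝ) (x : α) : ℝ := ∫ y, f (x, y) ∂ν

/-- The density of the second component of a pair with joint density `f`. -/
noncomputable def sndMarginal (μ : Measure α) (f : α × β → ℝ) (y : β) : ℝ := ∫ x, f (x, y) ∂μ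

variable [SFinite ν]

lemma aemeasurable_fstMarginal (hf : Integrable f (μ.prod ν)) :
    AEMeasurable (fstMarginal ν f) μ :=
  hf.integral_prod_left.aemeasurable

lemma fst_densityMeasure [SFinite μ] (hf : Integrable f (μ.prod ν)) (hf0 : 0 ≤ᵐ[μ.prod ν] f) :
    (densityMeasure (μ.prod ν) f).fst = densityMeasure μ (fstMarginal ν f) := by
  ext s hs
  rw [Measure.fst_apply hs, densityMeasure, densityMeasure,
    withDensity_apply _ (measurable_fst hs), withDensity_apply _ hs, ← Set.prod_univ,
    setLIntegral_prod _ hf.aemeasurable.ennreal_ofReal.restrict, Measure.restrict_univ]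
  refine lintegral_congr_ae (ae_restrict_of_ae ?_)
  filter_upwards [hf.prod_right_ae, Measure.ae_ae_of_ae_prod hf0] with x hx hx0
  exact (ofReal_integral_eq_lintegral_ofReal hx hx0).symm

variable [SFinite μ]

lemma aemeasurable_sndMarginal (hf : Integrable f (μ.prod ν)) :
    AEMeasurable (sndMarginal μ f) ν :=
  hf.integral_prod_right.aemeasurable

lemma snd_densityMeasure (hf : Integrable f (μ.prod ν)) (hf0 : 0 ≤ᵐ[μ.prod ν] f) :
    (densityMeasure (μ.prod ν) f).snd = densityMeasure ν (sndMarginal μ f) := by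
  ext s hs
  rw [Measure.snd_apply hs, densityMeasure, densityMeasure,
    withDensity_apply _ (measurable_snd hs), withDensity_apply _ hs, ← Set.univ_prod,
    setLIntegral_prod_symm _ hf.aemeasurable.ennreal_ofReal.restrict, Measure.restrict_univ]
  have hf0_swap : ∀ᵐ z ∂ν.prod μ, 0 ≤ f z.swap :=
    Measure.measurePreserving_swap.quasiMeasurePreserving.ae hf0
  refine lintegral_congr_ae (ae_restrict_of_ae ?_)
  filter_upwards [hf.prod_left_ae, Measure.ae_ae_of_ae_prod hf0_swap] with y hy hy0
  exact (ofReal_integral_eq_lintegral_ofReal hy hy0).symm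

end Marginal

section MutualInformation

variable {α β : Type*} [MeasurableSpace α] [MeasurableSpace β] {μ : Measure α} {ν : Measure β}
  {p q : α × β → ℝ}

/-- The information density of a pair with joint density `q`, whose expectation under `q` is the
mutual information of the pair. -/
noncomputable def infoDensity (μ : Measure α) (ν : Measure β) (q : α × β → ℝ) (z : α × β) : ℝ :=
  log (q z / (fstMarginal ν q z.1 * sndMarginal μ q z.2))

/-- The proposal mutual information `I_q(ξ; η)` of a pair with joint density `p`. The mutual
information `I(ξ; η)` of the pair is the case `q = p`. -/
noncomputable def proposalMutualInfo (μ : Measure α) (ν : Measure β) (p q : α × β → ℝ) : ℝ :=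
  ∫ z, p z * infoDensity μ ν q z ∂(μ.prod ν)

variable [SigmaFinite μ] [SigmaFinite ν]

lemma infoDensity_sub_infoDensity (hp : IsProbDensity (μ.prod ν) p)
    (hq : IsProbDensity (μ.prod ν) q)
    (hpq : densityMeasure (μ.prod ν) p ≪ densityMeasure (μ.prod ν) q) :
    ∀ᵐ z ∂densityMeasure (μ.prod ν) p, infoDensity μ ν p z - infoDensity μ ν q z =
      llr (densityMeasure (μ.prod ν) p) (densityMeasure (μ.prod ν) q) z -
        llr (densityMeasure (μ.prod ν) p).fst (densityMeasure (μ.prod ν) q).fst z.1 -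
        llr (densityMeasure (μ.prod ν) p).snd (densityMeasure (μ.prod ν) q).snd z.2 := by
  have hX := ae_pos_and_llr_densityMeasure (aemeasurable_fstMarginal hp.integrable)
    (aemeasurable_fstMarginal hq.integrable) (by
      rw [← fst_densityMeasure hp.integrable hp.nonneg,
        ← fst_densityMeasure hq.integrable hq.nonneg]
      exact hpq.map measurable_fst)
  have hY := ae_pos_and_llr_densityMeasure (aemeasurable_sndMarginal hp.integrable)
    (aemeasurable_sndMarginal hq.integrable) (by
      rw [← snd_densityMeasure hp.integrable hp.nonneg,
        ← snd_densityMeasure hq.integrable hq.nonneg]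
      exact hpq.map measurable_snd)
  rw [← fst_densityMeasure hp.integrable hp.nonneg,
    ← fst_densityMeasure hq.integrable hq.nonneg] at hX
  rw [← snd_densityMeasure hp.integrable hp.nonneg,
    ← snd_densityMeasure hq.integrable hq.nonneg] at hY
  filter_upwards [ae_pos_and_llr_densityMeasure hp.aemeasurable hq.aemeasurable hpq,
    ae_of_ae_map measurable_fst.aemeasurable hX, ae_of_ae_map measurable_snd.aemeasurable hY]
    with z ⟨hpz, hqz, h_llr⟩ ⟨hpX, hqX, h_llrX⟩ ⟨hpY, hqY, h_llrY⟩
  rw [h_llr, h_llrX, h_llrY, infoDensity, infoDensity, log_div hpz.ne' (by positivity),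
    log_div hqz.ne' (by positivity), log_mul hpX.ne' hpY.ne', log_mul hqX.ne' hqY.ne',
    log_div hpz.ne' hqz.ne', log_div hpX.ne' hqX.ne', log_div hpY.ne' hqY.ne']
  ring

theorem abs_proposalMutualInfo_sub_le (hp : IsProbDensity (μ.prod ν) p)
    (hq : IsProbDensity (μ.prod ν) q) (hpq : ∀ᵐ z ∂μ.prod ν, 0 < p z → 0 < q z)
    (h_info : Integrable (fun z => p z * infoDensity μ ν p z) (μ.prod ν))
    (h_kl : Integrable (fun z => p z * log (p z / q z)) (μ.prod ν)) :
    |proposalMutualInfo μ ν p q - proposalMutualInfo μ ν p p| ≤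
      ∫ z, p z * log (p z / q z) ∂(μ.prod ν) := by
  have hPQ := densityMeasure_absolutelyContinuous hp.aemeasurable hq.aemeasurable hpq
  have h_llr := (ae_pos_and_llr_densityMeasure hp.aemeasurable hq.aemeasurable hPQ).mono
    fun z hz => hz.2.2
  have h_sub := infoDensity_sub_infoDensity hp hq hPQ
  have := hp.isProbabilityMeasure
  have := hq.isProbabilityMeasure
  rw [← integrable_densityMeasure_iff hp.aemeasurable hp.nonneg] at h_info h_kl
  simp only [proposalMutualInfo, ← integral_densityMeasure hp.aemeasurable hp.nonneg]
  rw [← integrable_congr h_llr] at h_kl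
  rw [← integral_congr_ae h_llr]
  set P := densityMeasure (μ.prod ν) p
  set Q := densityMeasure (μ.prod ν) q
  have h_info_q : Integrable (infoDensity μ ν q) P := by
    have h_excess : Integrable (fun z => infoDensity μ ν p z - infoDensity μ ν q z) P :=
      (integrable_congr h_sub).2 <|
        (h_kl.sub (integrable_llr_fst hPQ h_kl)).sub (integrable_llr_snd hPQ h_kl)
    simpa only [sub_sub_cancel] using h_info.sub' h_excess
  rw [abs_sub_comm, ← integral_sub h_info h_info_q, integral_congr_ae h_sub]
  exact abs_integral_llr_sub_fst_sub_snd_le hPQ (by simp only [measure_univ]) h_kl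

theorem proposal_mutual_information_tendsto_general {ι : Type*} {l : Filter ι}
    {q : ι → α × β → ℝ} (hp : IsProbDensity (μ.prod ν) p)
    (hq : ∀ i, IsProbDensity (μ.prod ν) (q i))
    (hpq : ∀ i, ∀ᵐ z ∂μ.prod ν, 0 < p z → 0 < q i z)
    (h_info : Integrable (fun z => p z * infoDensity μ ν p z) (μ.prod ν))
    (h_kl : ∀ i, Integrable (fun z => p z * log (p z / q i z)) (μ.prod ν))
    (h_kl_tendsto : Tendsto (fun i => ∫ z, p z * log (p z / q i z) ∂(μ.prod ν)) l (nhds 0)) :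
    Tendsto (fun i => proposalMutualInfo μ ν p (q i)) l (nhds (proposalMutualInfo μ ν p p)) := by
  rw [tendsto_iff_norm_sub_tendsto_zero]
  exact squeeze_zero (fun _ => norm_nonneg _)
    (fun i => abs_proposalMutualInfo_sub_le hp (hq i) (hpq i) h_info (h_kl i)) h_kl_tendsto

end MutualInformation

/-- Let `q N` be a sequence of joint probability densities on the space
of `(ξ, η)` such that `D_KL(p ‖ q N) → 0` as `N → ∞`, where `(ξ, η)` is an absolutely
continuous pair of random vectors with joint density `p` (marginals `pX`, `pY`).  Then
`I_{q N}(ξ; η) → I(ξ; η)` as `N → ∞`, where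
`I_{q N}(ξ; η) = E_p[log (q N (ξ,η) / (qX N ξ * qY N η))]` and `qX N`, `qY N` are the
marginals of `q N`. -/
theorem proposal_mutual_information_tendsto
    (n m : ℕ)
    -- joint density p of (ξ, η) and its marginals
    (p : (Fin n → ℝ) × (Fin m → ℝ) → ℝ)
    (hp_meas : Measurable p)
    (hp_nonneg : ∀ z, 0 ≤ p z)
    (hp_int : ∫ z, p z = 1)
    (pX : (Fin n → ℝ) → ℝ) (hpX : ∀ x, pX x = ∫ y, p (x, y))
    (pY : (Fin m → ℝ) → ℝ) (hpY : ∀ y, pY y = ∫ x, p (x, y))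
    -- on the support of p the marginal densities of p are positive (holds a.e.)
    (hp_supp : ∀ᵐ z : (Fin n → ℝ) × (Fin m → ℝ) ∂volume,
      0 < p z → 0 < pX z.1 ∧ 0 < pY z.2)
    -- the sequence of proposal densities q N and their marginals
    (q : ℕ → (Fin n → ℝ) × (Fin m → ℝ) → ℝ)
    (hq_meas : ∀ N, Measurable (q N))
    (hq_pos : ∀ N z, 0 < q N z)
    (hq_int : ∀ N, ∫ z, q N z = 1)
    (qX : ℕ → (Fin n → ℝ) → ℝ) (hqX : ∀ N x, qX N x = ∫ y, q N (x, y))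
    (qY : ℕ → (Fin m → ℝ) → ℝ) (hqY : ∀ N y, qY N y = ∫ x, q N (x, y))
    -- integrability of all the integrands involved
    (h_int_I : Integrable fun z : (Fin n → ℝ) × (Fin m → ℝ) =>
      p z * Real.log (p z / (pX z.1 * pY z.2)))
    (h_int_Iq : ∀ N, Integrable fun z : (Fin n → ℝ) × (Fin m → ℝ) =>
      p z * Real.log (q N z / (qX N z.1 * qY N z.2)))
    (h_int_KL : ∀ N, Integrable fun z : (Fin n → ℝ) × (Fin m → ℝ) =>
      p z * Real.log (p z / q N z))
    (h_int_mX : ∀ N, Integrable fun z : (Fin n → ℝ) × (Fin m → ℝ) =>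
      p z * Real.log (pX z.1 / qX N z.1))
    (h_int_mY : ∀ N, Integrable fun z : (Fin n → ℝ) × (Fin m → ℝ) =>
      p z * Real.log (pY z.2 / qY N z.2))
    -- D_KL(p ‖ q N) → 0
    (h_KL_tendsto : Tendsto
      (fun N => ∫ z : (Fin n → ℝ) × (Fin m → ℝ), p z * Real.log (p z / q N z))
      atTop (nhds 0)) :
    -- I_{q N}(ξ; η) → I(ξ; η)
    Tendsto
      (fun N => ∫ z : (Fin n → ℝ) × (Fin m → ℝ),
        p z * Real.log (q N z / (qX N z.1 * qY N z.2)))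
      atTop
      (nhds (∫ z : (Fin n → ℝ) × (Fin m → ℝ),
        p z * Real.log (p z / (pX z.1 * pY z.2)))) := by
  obtain rfl : pX = fstMarginal volume p := funext hpX
  obtain rfl : pY = sndMarginal volume p := funext hpY
  obtain rfl : qX = fun N => fstMarginal volume (q N) := funext fun N => funext (hqX N)
  obtain rfl : qY = fun N => sndMarginal volume (q N) := funext fun N => funext (hqY N)
  exact proposal_mutual_information_tendsto_general ⟨ae_of_all _ hp_nonneg, hp_int⟩
    (fun N => ⟨ae_of_all _ fun z => (hq_pos N z).le, hq_int N⟩)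
    (fun N => ae_of_all _ fun z _ => hq_pos N z) h_int_I h_int_KL h_KL_tendsto
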